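/- Let k ≥ 3 be an integer and let X₁ and X₂ be finite simple graphs each of minimum degree at least k. Then X₁ and X₂ are isomorphic as graphs if and only if the matroids St_k(X₁) and St_k(X₂) are isomorphic, i.e., if and only if there is a bijection σ : E(X₁) → E(X₂) such that for every set A ⊆ E(X₁), A is independent in St_k(X₁) if and only if σ(A) is independent in St_k(X₂) (equivalently: for every k-element set A of edges, A is a star in X₁ if and only if σ(A) is a star in X₂). -/

import Mathlib

/-- Independence in `St_k(X)` for a set `A` of edges of `X` (as a set of elements of
the edge set): `|A| ≤ k−1`, or `|A| = k` and `A` is not a star. -/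
def StIndepSet {V : Type*} (X : SimpleGraph V) (k : ℕ) (A : Set X.edgeSet) : Prop :=
  A.ncard ≤ k - 1 ∨ (A.ncard = k ∧ ¬ ∃ v : V, ∀ e ∈ A, v ∈ (e : Sym2 V))

/-!
For `k ≥ 3`, a set of at least `k` edges is a star as soon as all its `k`-element subsets are:
two distinct edges share at most one vertex, so exchanging a single edge does not move the centre.
Hence an isomorphism `σ` of star matroids carries large stars to stars in both directions, and the
set of all edges at a vertex `v` is sent exactly onto the set of all edges at some vertex `f v`.
An edge `s(v, w)` is then sent to the edge through `f v` and `f w`, so `f` is an isomorphism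
inducing `σ`.
-/

theorem nontrivial_of_le_encard {α : Type*} {s : Set α} {k : ℕ} (hk : 2 ≤ k)
    (hs : k ≤ s.encard) : s.Nontrivial :=
  Set.one_lt_encard_iff_nontrivial.1 (lt_of_lt_of_le (by exact_mod_cast hk) hs)

section Star

variable {V : Type*} {X : SimpleGraph V}

/-- The set of all edges incident to `v`, as a set of elements of the edge set: the largest star
centred at `v`. (`SimpleGraph.incidenceSet` is the same set inside `Sym2 V`.) -/
def edgesAt (X : SimpleGraph V) (v : V) : Set X.edgeSet :=
  {e | v ∈ (e : Sym2 V)}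

/-- A set of edges is a star if its edges share a common vertex. The empty set is a star as soon
as there is a vertex. -/
def IsStar (A : Set X.edgeSet) : Prop :=
  ∃ v, A ⊆ edgesAt X v

theorem mem_edgesAt {v : V} {e : X.edgeSet} : e ∈ edgesAt X v ↔ v ∈ (e : Sym2 V) :=
  Iff.rfl

theorem isStar_edgesAt (X : SimpleGraph V) (v : V) : IsStar (edgesAt X v) :=
  ⟨v, Set.Subset.rfl⟩

theorem IsStar.mono {A B : Set X.edgeSet} (hAB : A ⊆ B) (hB : IsStar B) : IsStar A :=
  hB.imp fun _ hv ↦ hAB.trans hv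

theorem stIndepSet_iff {k : ℕ} {A : Set X.edgeSet} :
    StIndepSet X k A ↔ A.ncard ≤ k - 1 ∨ (A.ncard = k ∧ ¬ IsStar A) :=
  Iff.rfl

theorem encard_edgesAt (X : SimpleGraph V) (v : V) :
    (edgesAt X v).encard = (X.neighborSet v).encard := by
  classical
  have image_eq : Subtype.val '' edgesAt X v = X.incidenceSet v := by
    ext e
    simp [mem_edgesAt, SimpleGraph.incidenceSet, and_comm]
  rw [← Set.encard_congr (X.incidenceSetEquivNeighborSet v), ← image_eq,
    Subtype.val_injective.encard_image]

theorem edgesAt_nonempty_iff {v : V} : (edgesAt X v).Nonempty ↔ ¬ X.IsIsolated v := by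
  rw [← Set.encard_ne_zero, encard_edgesAt, Set.encard_ne_zero, SimpleGraph.neighborSet_nonempty]

theorem eq_of_subset_edgesAt {A : Set X.edgeSet} (hA : A.Nontrivial) {v w : V}
    (hv : A ⊆ edgesAt X v) (hw : A ⊆ edgesAt X w) : v = w := by
  obtain ⟨e, he, e', he', hne⟩ := hA
  by_contra hvw
  exact hne (Subtype.ext (Sym2.eq_of_ne_mem hvw (hv he) (hw he) (hv he') (hw he')))

theorem isStar_iff_forall_subset_ncard_eq {k : ℕ} (hk : 3 ≤ k) {S : Set X.edgeSet}
    (hS : k ≤ S.encard) : IsStar S ↔ ∀ A ⊆ S, A.ncard = k → IsStar A := by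
  refine ⟨fun h A hAS _ ↦ h.mono hAS, fun h ↦ ?_⟩
  obtain ⟨A, hAS, hA⟩ := Set.exists_subset_encard_eq hS
  have hA_card : A.ncard = k := by simp [Set.ncard, hA]
  obtain ⟨v, hv⟩ := h A hAS hA_card
  refine ⟨v, fun e he ↦ ?_⟩
  by_cases heA : e ∈ A
  · exact hv heA
  obtain ⟨a, ha⟩ : A.Nonempty := Set.nonempty_of_ncard_ne_zero (by omega)
  obtain ⟨w, hw⟩ := h (insert e (A \ {a}))
    (Set.insert_subset he (Set.sdiff_subset.trans hAS)) (by rw [Set.ncard_exchange heA ha, hA_card])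
  have hrest : (A \ {a}).Nontrivial := by
    refine (Set.one_lt_ncard_iff_nontrivial_and_finite.1 ?_).1
    rw [Set.ncard_sdiff_singleton_of_mem ha]
    omega
  have hvw : v = w := eq_of_subset_edgesAt hrest (Set.sdiff_subset.trans hv)
    ((Set.subset_insert _ _).trans hw)
  exact hvw ▸ hw (Set.mem_insert _ _)

end Star

section EdgeBijection

variable {V₁ V₂ : Type*} {X₁ : SimpleGraph V₁} {X₂ : SimpleGraph V₂}

theorem isStar_image_iff {k : ℕ} (hk : 3 ≤ k) {σ : X₁.edgeSet ≃ X₂.edgeSet}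
    (hσ : ∀ A : Set X₁.edgeSet, A.ncard = k → (IsStar (σ '' A) ↔ IsStar A))
    {S : Set X₁.edgeSet} (hS : k ≤ S.encard) : IsStar (σ '' S) ↔ IsStar S := by
  rw [isStar_iff_forall_subset_ncard_eq hk (by rwa [σ.injective.encard_image]),
    isStar_iff_forall_subset_ncard_eq hk hS, Set.forall_subset_image_iff]
  refine forall₂_congr fun A _ ↦ ?_
  rw [Set.ncard_image_of_injective A σ.injective]
  exact forall_congr' (hσ A)

theorem exists_image_edgesAt_eq {k : ℕ} (hk : 3 ≤ k) {σ : X₁.edgeSet ≃ X₂.edgeSet}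
    (hσ : ∀ A : Set X₁.edgeSet, A.ncard = k → (IsStar (σ '' A) ↔ IsStar A))
    {v : V₁} (hv : k ≤ (edgesAt X₁ v).encard) : ∃ w, σ '' edgesAt X₁ v = edgesAt X₂ w := by
  obtain ⟨w, hw⟩ := (isStar_image_iff hk hσ hv).2 (isStar_edgesAt X₁ v)
  have hvw : edgesAt X₁ v ⊆ σ ⁻¹' edgesAt X₂ w := Set.image_subset_iff.1 hw
  obtain ⟨u, hu⟩ : IsStar (σ ⁻¹' edgesAt X₂ w) := by
    rw [← isStar_image_iff hk hσ (hv.trans (Set.encard_le_encard hvw)),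
      Set.image_preimage_eq _ σ.surjective]
    exact isStar_edgesAt X₂ w
  have hnontriv : (edgesAt X₁ v).Nontrivial := nontrivial_of_le_encard (by omega) hv
  have hvu : v = u := eq_of_subset_edgesAt hnontriv Set.Subset.rfl (hvw.trans hu)
  refine ⟨w, hw.antisymm ?_⟩
  rw [← Set.image_preimage_eq (edgesAt X₂ w) σ.surjective]
  exact Set.image_mono (hvu ▸ hu)

theorem coe_eq_map_of_image_edgesAt_subset {σ : X₁.edgeSet → X₂.edgeSet} {f : V₁ → V₂}
    (hf : Function.Injective f) (hσ : ∀ v, σ '' edgesAt X₁ v ⊆ edgesAt X₂ (f v))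
    (e : X₁.edgeSet) : (σ e : Sym2 V₂) = (e : Sym2 V₁).map f := by
  have hmem : ∀ v ∈ (e : Sym2 V₁), f v ∈ (σ e : Sym2 V₂) :=
    fun v hv ↦ hσ v (Set.mem_image_of_mem σ hv)
  obtain ⟨⟨v, w⟩, hvw⟩ := e
  exact (Sym2.mem_and_mem_iff (hf.ne (SimpleGraph.Adj.ne hvw))).1
    ⟨hmem v (Sym2.mem_mk_left v w), hmem w (Sym2.mem_mk_right v w)⟩

theorem exists_iso_mapEdgeSet_eq_of_coe_eq_map {σ : X₁.edgeSet ≃ X₂.edgeSet} {f : V₁ → V₂}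
    (hf : Function.Injective f) (hσ : ∀ e, (σ e : Sym2 V₂) = (e : Sym2 V₁).map f)
    (hX₂ : ∀ w, ¬ X₂.IsIsolated w) : ∃ φ : X₁ ≃g X₂, φ.mapEdgeSet = σ := by
  have hsurj : Function.Surjective f := fun w ↦ by
    obtain ⟨e', he'⟩ := edgesAt_nonempty_iff.2 (hX₂ w)
    obtain ⟨e, rfl⟩ := σ.surjective e'
    rw [mem_edgesAt, hσ, Sym2.mem_map] at he'
    exact he'.imp fun _ ↦ And.right
  have hadj (v w : V₁) : X₂.Adj (f v) (f w) ↔ X₁.Adj v w := by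
    constructor
    · intro h
      obtain ⟨e, he⟩ := σ.surjective ⟨s(f v, f w), h⟩
      have hmap : (e : Sym2 V₁).map f = s(v, w).map f := by rw [← hσ, he, Sym2.map_mk]
      have hevw : (e : Sym2 V₁) = s(v, w) := Sym2.map.injective hf hmap
      exact X₁.mem_edgeSet.1 (hevw ▸ e.2)
    · intro h
      have hmem := (σ ⟨s(v, w), h⟩).2
      rwa [hσ, Sym2.map_mk, SimpleGraph.mem_edgeSet] at hmem
  exact ⟨⟨Equiv.ofBijective f ⟨hf, hsurj⟩, hadj _ _⟩, Equiv.ext fun e ↦ Subtype.ext (hσ e).symm⟩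

theorem exists_iso_mapEdgeSet_eq_of_isStar_image_iff {k : ℕ} (hk : 3 ≤ k)
    {σ : X₁.edgeSet ≃ X₂.edgeSet}
    (hσ : ∀ A : Set X₁.edgeSet, A.ncard = k → (IsStar (σ '' A) ↔ IsStar A))
    (hX₁ : ∀ v, k ≤ (X₁.neighborSet v).encard) (hX₂ : ∀ w, ¬ X₂.IsIsolated w) :
    ∃ φ : X₁ ≃g X₂, φ.mapEdgeSet = σ := by
  simp only [← encard_edgesAt] at hX₁
  choose f hf using fun v ↦ exists_image_edgesAt_eq hk hσ (hX₁ v)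
  have hinj : Function.Injective f := fun v w hvw ↦ by
    have himage : σ '' edgesAt X₁ v = σ '' edgesAt X₁ w := by rw [hf, hf, hvw]
    have hsubset : edgesAt X₁ v ⊆ edgesAt X₁ w := (σ.injective.image_injective himage).subset
    exact eq_of_subset_edgesAt (nontrivial_of_le_encard (by omega) (hX₁ v)) Set.Subset.rfl hsubset
  exact exists_iso_mapEdgeSet_eq_of_coe_eq_map hinj
    (coe_eq_map_of_image_edgesAt_subset hinj fun v ↦ (hf v).subset) hX₂

theorem image_mapEdgeSet_edgesAt (φ : X₁ ≃g X₂) (v : V₁) :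
    φ.mapEdgeSet '' edgesAt X₁ v = edgesAt X₂ (φ v) := by
  rw [← Equiv.eq_preimage_iff_image_eq]
  ext e
  change v ∈ (e : Sym2 V₁) ↔ φ v ∈ (e : Sym2 V₁).map φ
  simp [Sym2.mem_map]

theorem isStar_image_mapEdgeSet_iff (φ : X₁ ≃g X₂) {A : Set X₁.edgeSet} :
    IsStar (φ.mapEdgeSet '' A) ↔ IsStar A := by
  simp only [IsStar, φ.surjective.exists, ← image_mapEdgeSet_edgesAt,
    Set.image_subset_image_iff φ.mapEdgeSet.injective]

theorem forall_stIndepSet_image_iff {k : ℕ} (hk : 0 < k) {σ : X₁.edgeSet ≃ X₂.edgeSet} :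
    (∀ A : Set X₁.edgeSet, StIndepSet X₁ k A ↔ StIndepSet X₂ k (σ '' A)) ↔
      ∀ A : Set X₁.edgeSet, A.ncard = k → (IsStar (σ '' A) ↔ IsStar A) := by
  refine forall_congr' fun A ↦ ?_
  rw [stIndepSet_iff, stIndepSet_iff, Set.ncard_image_of_injective A σ.injective]
  have hcard : A.ncard = k → ¬ A.ncard ≤ k - 1 := by omega
  tauto

end EdgeBijection

/-- An infinite `A` has `A.ncard = 0`, so it counts as independent on both sides and imposes no
condition on `σ`. -/
theorem stmt_4_general {V₁ V₂ : Type*} (X₁ : SimpleGraph V₁) (X₂ : SimpleGraph V₂)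
    (k : ℕ) (hk : 3 ≤ k) (hX₁ : ∀ v, k ≤ (X₁.neighborSet v).encard)
    (hX₂ : ∀ w, ¬ X₂.IsIsolated w) :
    Nonempty (X₁ ≃g X₂) ↔
      ∃ σ : X₁.edgeSet ≃ X₂.edgeSet,
        ∀ A : Set X₁.edgeSet, StIndepSet X₁ k A ↔ StIndepSet X₂ k (σ '' A) := by
  simp only [forall_stIndepSet_image_iff (show 0 < k by omega)]
  constructor
  · rintro ⟨φ⟩
    exact ⟨φ.mapEdgeSet, fun _ _ ↦ isStar_image_mapEdgeSet_iff φ⟩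
  · rintro ⟨σ, hσ⟩
    obtain ⟨φ, -⟩ := exists_iso_mapEdgeSet_eq_of_isStar_image_iff hk hσ hX₁ hX₂
    exact ⟨φ⟩

/-- For `k ≥ 3` and finite simple graphs `X₁, X₂` of minimum degree
at least `k`: `X₁ ≅ X₂` as graphs iff `St_k(X₁) ≅ St_k(X₂)` as matroids, i.e. iff
there is a bijection `σ : E(X₁) → E(X₂)` such that every `A ⊆ E(X₁)` is independent
in `St_k(X₁)` iff `σ(A)` is independent in `St_k(X₂)`. -/
theorem stmt_4 {V₁ V₂ : Type*} [Fintype V₁] [Fintype V₂]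
    (X₁ : SimpleGraph V₁) (X₂ : SimpleGraph V₂) [DecidableRel X₁.Adj] [DecidableRel X₂.Adj]
    (k : ℕ) (hk : 3 ≤ k) (hd₁ : ∀ v, k ≤ X₁.degree v) (hd₂ : ∀ v, k ≤ X₂.degree v) :
    Nonempty (X₁ ≃g X₂) ↔
      ∃ σ : X₁.edgeSet ≃ X₂.edgeSet,
        ∀ A : Set X₁.edgeSet, StIndepSet X₁ k A ↔ StIndepSet X₂ k (σ '' A) := by
  refine stmt_4_general X₁ X₂ k hk (fun v ↦ ?_) fun w ↦ (X₂.degree_pos w).1 (by grind)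
  simpa only [← Set.coe_fintypeCard, X₁.card_neighborSet_eq_degree, Nat.cast_le] using hd₁ v
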